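/- Proposition 4.1 (correlation-kernel form of the eigenvalue density for the product of truncated unitary matrices and a shifted Ginibre matrix, residue form). Assume a₁,…,a_N > 0 are pairwise distinct, let ξ_j(y) := ∏_{l=1}^r Γ(μ_l−ν_l) · Φ^{(μ)}(−a_j;y), g_{ij} := ∫₀^∞ x^{i−1} ξ_j(x) dx for 1 ≤ i,j ≤ N, assume det[g_{ij}] ≠ 0, and set Z_N := N!·det[g_{ij}]. Define K_N(x,y) := ∫₀^∞ u^{ν₀} e^{−u} Ψ^{(μ)}(u;x) · ( ∑_{j=1}^N Φ^{(μ)}(−a_j;y) e^{−a_j} ∏_{l≠j} ((−u−a_l)/(a_j−a_l)) ) du for x,y > 0. Then for all (x₁,…,x_N) ∈ (0,∞)^N, (1/Z_N)·det[x_j^{i−1}]_{i,j=1}^N · det[ξ_i(x_j)]_{i,j=1}^N = (1/N!)·det[K_N(x_i,x_j)]_{i,j=1}^N. -/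

import Mathlib

open MeasureTheory Filter Topology

noncomputable section


/-- Pochhammer symbol `(a)_j` over `ℝ`. -/
def poch (a : ℝ) (j : ℕ) : ℝ := ∏ i ∈ Finset.range j, (a + i)

/-- The hypergeometric function `₀F₁(b; z)` for complex argument `z`. -/
def hyp0F1 (b : ℝ) (z : ℂ) : ℂ :=
  ∑' k : ℕ, (Real.Gamma b : ℂ) * z ^ k /
    ((Nat.factorial k : ℂ) * (Real.Gamma (b + k) : ℂ))

/-- The hypergeometric function `₀F₁(b; z)` for real argument `z`. -/
def hyp0F1R (b z : ℝ) : ℝ :=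
  ∑' k : ℕ, Real.Gamma b * z ^ k / (Nat.factorial k * Real.Gamma (b + k))

/-- The terminating hypergeometric sum `₁F₁(-k; b; u)`. -/
def hyp1F1T (k : ℕ) (b u : ℝ) : ℝ :=
  ∑ j ∈ Finset.range (k + 1),
    poch (-(k : ℝ)) j / (poch b j * Nat.factorial j) * u ^ j

/-- The function `Ψ(u;x)` of the paper. -/
def Psi (r ν0 : ℕ) (ν : Fin r → ℕ) (u x : ℝ) : ℝ :=
  (1 / Real.Gamma ((ν0 : ℝ) + 1)) *
    ∑' k : ℕ, x ^ k / Nat.factorial k * hyp1F1T k ((ν0 : ℝ) + 1) u *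
      ∏ l, 1 / Real.Gamma ((ν l : ℝ) + 1 + k)

/-- The positive orthant in `ℝ^r`. -/
def posOrth (r : ℕ) : Set (Fin r → ℝ) := {t | ∀ i, 0 < t i}

/-- The function `Φ(v;y)` of the paper, complex `v`. -/
def Phi (r ν0 : ℕ) (ν : Fin r → ℕ) (v : ℂ) (y : ℝ) : ℂ :=
  ((1 / Real.Gamma ((ν0 : ℝ) + 1) : ℝ) : ℂ) *
    ∫ t in posOrth r,
      (((∏ i, (t i) ^ ((ν i : ℝ) - 1) * Real.exp (-t i)) *
          (y / ∏ i, t i) ^ ν0 * Real.exp (-(y / ∏ i, t i)) : ℝ) : ℂ) *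
        hyp0F1 ((ν0 : ℝ) + 1) (-(v * ((y / ∏ i, t i : ℝ) : ℂ)))

/-- The function `Φ(v;y)` of the paper, real `v`. -/
def PhiR (r ν0 : ℕ) (ν : Fin r → ℕ) (v y : ℝ) : ℝ :=
  (1 / Real.Gamma ((ν0 : ℝ) + 1)) *
    ∫ t in posOrth r,
      ((∏ i, (t i) ^ ((ν i : ℝ) - 1) * Real.exp (-t i)) *
          (y / ∏ i, t i) ^ ν0 * Real.exp (-(y / ∏ i, t i))) *
        hyp0F1R ((ν0 : ℝ) + 1) (-(v * (y / ∏ i, t i)))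

/-- The double-contour-integral correlation kernel `K_N(x,y)` of Proposition 2.1,
with `C` the counterclockwise circle of center `c` and radius `R`. -/
def KN (r ν0 N : ℕ) (ν : Fin r → ℕ) (a : Fin N → ℝ) (c : ℂ) (R : ℝ) (x y : ℝ) : ℂ :=
  ∫ u in Set.Ioi (0 : ℝ),
    (2 * Real.pi * Complex.I)⁻¹ *
      ∮ v in C(c, R),
        (u : ℂ) ^ ν0 * Complex.exp (-(u : ℂ) + v) * ((Psi r ν0 ν u x : ℝ) : ℂ) *
          Phi r ν0 ν v y * ((u : ℂ) - v)⁻¹ * ∏ l, ((u : ℂ) + (a l : ℂ)) / (v + (a l : ℂ))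

/-- An admissible contour for `K_N`: a counterclockwise circle contained in the left
half-plane which encloses all the points `-a l`. -/
def AdmCircle (N : ℕ) (a : Fin N → ℝ) (c : ℂ) (R : ℝ) : Prop :=
  0 < R ∧ c.re + R < 0 ∧ ∀ l, ‖-(a l : ℂ) - c‖ < R

/-- The Meijer G-function `G^{1,0}_{0,r+2}(—;0,-ν₀,…,-ν_r | z)`, complex argument. -/
def G1 (r ν0 : ℕ) (ν : Fin r → ℕ) (z : ℂ) : ℂ :=
  ∑' k : ℕ, (-z) ^ k /
    ((Nat.factorial k : ℂ) * (Real.Gamma ((ν0 : ℝ) + 1 + k) : ℂ) *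
      ∏ l, (Real.Gamma ((ν l : ℝ) + 1 + k) : ℂ))

/-- The Meijer G-function `G^{1,0}_{0,r+2}(—;0,-ν₀,…,-ν_r | z)`, real argument. -/
def G1R (r ν0 : ℕ) (ν : Fin r → ℕ) (z : ℝ) : ℝ :=
  ∑' k : ℕ, (-z) ^ k /
    (Nat.factorial k * Real.Gamma ((ν0 : ℝ) + 1 + k) *
      ∏ l, Real.Gamma ((ν l : ℝ) + 1 + k))

/-- `g₀(w) = ∑ (-1)^k w^{ν₀+k}/(k! Γ(ν₀+k+1))`, complex argument. -/
def g0C (ν0 : ℕ) (w : ℂ) : ℂ :=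
  ∑' k : ℕ, (-1 : ℂ) ^ k * w ^ (ν0 + k) /
    ((Nat.factorial k : ℂ) * (Real.Gamma ((ν0 : ℝ) + k + 1) : ℂ))

/-- `g₀(w)`, real argument. -/
def g0R (ν0 : ℕ) (w : ℝ) : ℝ :=
  ∑' k : ℕ, (-1 : ℝ) ^ k * w ^ (ν0 + k) /
    (Nat.factorial k * Real.Gamma ((ν0 : ℝ) + k + 1))

/-- The Meijer G-function `G^{r+1,0}_{0,r+2}(—;ν₀,…,ν_r,0 | z)` for `z > 0`, real form. -/
def G2R (r ν0 : ℕ) (ν : Fin r → ℕ) (z : ℝ) : ℝ :=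
  ∫ t in posOrth r,
    (∏ l, (t l) ^ ((ν l : ℝ) - 1) * Real.exp (-t l)) * g0R ν0 (z / ∏ l, t l)

/-- The critical hard-edge kernel `𝒦^{h,r}(ξ,η;τ)` of Theorem 1.2, the inner integral
running up the imaginary axis `v = i t`. -/
def Kcrit (r ν0 : ℕ) (ν : Fin r → ℕ) (G2 : ℂ → ℂ) (τ ξ η : ℝ) : ℂ :=
  (2 * Real.pi * Complex.I)⁻¹ *
    ∫ u in Set.Ioi (0 : ℝ), ∫ t : ℝ,
      ((u : ℂ) / (Complex.I * t)) ^ ν0 *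
        Complex.exp (-(τ : ℂ) * u - (u : ℂ) ^ 2 / 2 + (τ : ℂ) * (Complex.I * t) +
          (Complex.I * t) ^ 2 / 2) *
        ((u : ℂ) - Complex.I * t)⁻¹ * G1 r ν0 ν ((u * ξ : ℝ) : ℂ) *
        G2 (Complex.I * t * (η : ℂ)) * Complex.I

/-- The deformed critical kernel `𝒦^{h,r}_m(ξ,η;τ,σ)` of Theorem 1.3, the inner integral
running up the vertical line `Re v = -c`. -/
def KcritLine (r ν0 m : ℕ) (ν : Fin r → ℕ) (σ : ℕ → ℝ) (G2 : ℂ → ℂ) (c τ ξ η : ℝ) : ℂ :=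
  (2 * Real.pi * Complex.I)⁻¹ *
    ∫ u in Set.Ioi (0 : ℝ), ∫ t : ℝ,
      ((u : ℂ) / (-(c : ℂ) + Complex.I * t)) ^ ν0 *
        Complex.exp (-(τ : ℂ) * u - (u : ℂ) ^ 2 / 2 +
          (τ : ℂ) * (-(c : ℂ) + Complex.I * t) + (-(c : ℂ) + Complex.I * t) ^ 2 / 2) *
        ((u : ℂ) - (-(c : ℂ) + Complex.I * t))⁻¹ *
        (∏ j ∈ Finset.range m,
          ((u : ℂ) + (σ j : ℂ)) / ((-(c : ℂ) + Complex.I * t) + (σ j : ℂ))) *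
        G1 r ν0 ν ((u * ξ : ℝ) : ℂ) * G2 ((-(c : ℂ) + Complex.I * t) * (η : ℂ)) * Complex.I




/-- `Ψ(u;x)` in the case `r = 0`. -/
def Psi0 (ν0 : ℕ) (u x : ℝ) : ℝ :=
  Real.exp x * hyp0F1R ((ν0 : ℝ) + 1) (-(u * x)) / Real.Gamma ((ν0 : ℝ) + 1)

/-- `Φ(v;y)` in the case `r = 0`, complex `v`. -/
def Phi0 (ν0 : ℕ) (v : ℂ) (y : ℝ) : ℂ :=
  ((y ^ ν0 * Real.exp (-y) / Real.Gamma ((ν0 : ℝ) + 1) : ℝ) : ℂ) *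
    hyp0F1 ((ν0 : ℝ) + 1) (-(v * (y : ℂ)))

/-- The kernel `K_N` in the case `r = 0`. -/
def KN0 (ν0 N : ℕ) (a : Fin N → ℝ) (c : ℂ) (R : ℝ) (x y : ℝ) : ℂ :=
  ∫ u in Set.Ioi (0 : ℝ),
    (2 * Real.pi * Complex.I)⁻¹ *
      ∮ v in C(c, R),
        (u : ℂ) ^ ν0 * Complex.exp (-(u : ℂ) + v) * ((Psi0 ν0 u x : ℝ) : ℂ) *
          Phi0 ν0 v y * ((u : ℂ) - v)⁻¹ * ∏ l, ((u : ℂ) + (a l : ℂ)) / (v + (a l : ℂ))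

/-- Laguerre polynomial `L_n^{ν}(x)`. -/
def laguerreL (n νp : ℕ) (x : ℝ) : ℝ :=
  ∑ k ∈ Finset.range (n + 1),
    (-1 : ℝ) ^ k * (Nat.choose (n + νp) (n - k)) * x ^ k / Nat.factorial k

/-- The function `Ψ^{(μ)}(u;x)` of Section 4. -/
def PsiMu (r ν0 : ℕ) (μ ν : Fin r → ℕ) (u x : ℝ) : ℝ :=
  (1 / Real.Gamma ((ν0 : ℝ) + 1)) *
    ∑' k : ℕ, x ^ k / Nat.factorial k * hyp1F1T k ((ν0 : ℝ) + 1) u *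
      ∏ l, Real.Gamma ((μ l : ℝ) + 1 + k) / Real.Gamma ((ν l : ℝ) + 1 + k)

/-- The open unit cube in `ℝ^r`. -/
def unitCube (r : ℕ) : Set (Fin r → ℝ) := {t | ∀ i, 0 < t i ∧ t i < 1}

/-- The function `Φ^{(μ)}(v;y)` of Section 4, complex `v`. -/
def PhiMu (r ν0 : ℕ) (μ ν : Fin r → ℕ) (v : ℂ) (y : ℝ) : ℂ :=
  ((1 / (Real.Gamma ((ν0 : ℝ) + 1) * ∏ l, Real.Gamma ((μ l : ℝ) - (ν l : ℝ))) : ℝ) : ℂ) *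
    ∫ t in unitCube r,
      (((∏ l, (t l) ^ ((ν l : ℝ) - 1) * (1 - t l) ^ ((μ l : ℝ) - (ν l : ℝ) - 1)) *
          (y / ∏ l, t l) ^ ν0 * Real.exp (-(y / ∏ l, t l)) : ℝ) : ℂ) *
        hyp0F1 ((ν0 : ℝ) + 1) (-(v * ((y / ∏ l, t l : ℝ) : ℂ)))

/-- The function `Φ^{(μ)}(v;y)` of Section 4, real `v`. -/
def PhiMuR (r ν0 : ℕ) (μ ν : Fin r → ℕ) (v y : ℝ) : ℝ :=
  (1 / (Real.Gamma ((ν0 : ℝ) + 1) * ∏ l, Real.Gamma ((μ l : ℝ) - (ν l : ℝ)))) *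
    ∫ t in unitCube r,
      ((∏ l, (t l) ^ ((ν l : ℝ) - 1) * (1 - t l) ^ ((μ l : ℝ) - (ν l : ℝ) - 1)) *
          (y / ∏ l, t l) ^ ν0 * Real.exp (-(y / ∏ l, t l))) *
        hyp0F1R ((ν0 : ℝ) + 1) (-(v * (y / ∏ l, t l)))

/-- The kernel `K_N` for the truncated-unitary product of Section 4. -/
def KNmu (r ν0 N : ℕ) (μ ν : Fin r → ℕ) (a : Fin N → ℝ) (c : ℂ) (R : ℝ) (x y : ℝ) : ℂ :=
  ∫ u in Set.Ioi (0 : ℝ),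
    (2 * Real.pi * Complex.I)⁻¹ *
      ∮ v in C(c, R),
        (u : ℂ) ^ ν0 * Complex.exp (-(u : ℂ) + v) * ((PsiMu r ν0 μ ν u x : ℝ) : ℂ) *
          PhiMu r ν0 μ ν v y * ((u : ℂ) - v)⁻¹ * ∏ l, ((u : ℂ) + (a l : ℂ)) / (v + (a l : ℂ))

/-- Mixed domain `(0,1)^q × (0,∞)^{r-q}`. -/
def mixedSet (r q : ℕ) : Set (Fin r → ℝ) := {t | ∀ l, 0 < t l ∧ ((l : ℕ) < q → t l < 1)}

/-- The Meijer G-function `G^{1,q}_{q,r+2}(-μ₁,…,-μ_q; 0,-ν₀,…,-ν_r | z)`, real form. -/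
def G1qR (r ν0 q : ℕ) (μ ν : Fin r → ℕ) (z : ℝ) : ℝ :=
  ∑' k : ℕ, (-z) ^ k *
    (∏ l ∈ Finset.univ.filter fun l : Fin r => (l : ℕ) < q, Real.Gamma ((μ l : ℝ) + 1 + k)) /
    (Nat.factorial k * Real.Gamma ((ν0 : ℝ) + 1 + k) *
      ∏ l, Real.Gamma ((ν l : ℝ) + 1 + k))

/-- The Meijer G-function `G^{1,q}_{q,r+2}(-μ₁,…,-μ_q; 0,-ν₀,…,-ν_r | z)`, complex form. -/
def G1q (r ν0 q : ℕ) (μ ν : Fin r → ℕ) (z : ℂ) : ℂ :=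
  ∑' k : ℕ, (-z) ^ k *
    ((∏ l ∈ Finset.univ.filter fun l : Fin r => (l : ℕ) < q,
      Real.Gamma ((μ l : ℝ) + 1 + k) : ℝ) : ℂ) /
    ((Nat.factorial k : ℂ) * (Real.Gamma ((ν0 : ℝ) + 1 + k) : ℂ) *
      ∏ l, (Real.Gamma ((ν l : ℝ) + 1 + k) : ℂ))

/-- The Meijer G-function `G^{r+1,0}_{q,r+2}(μ₁,…,μ_q; ν₀,…,ν_r,0 | z)` for `z > 0`. -/
def G2qR (r ν0 q : ℕ) (μ ν : Fin r → ℕ) (z : ℝ) : ℝ :=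
  ∫ t in mixedSet r q,
    (∏ l : Fin r, if l.val < q then
        (t l) ^ ((ν l : ℝ) - 1) * (1 - t l) ^ ((μ l : ℝ) - (ν l : ℝ) - 1) /
          Real.Gamma ((μ l : ℝ) - (ν l : ℝ))
      else (t l) ^ ((ν l : ℝ) - 1) * Real.exp (-t l)) *
      g0R ν0 (z / ∏ l, t l)



lemma auxS1 (k A m : ℕ) : (∑ j ∈ Finset.range (k + 1), (-1 : ℤ) ^ j * (k.choose j : ℤ) * ((A + j).choose m : ℤ))
    = if k ≤ m then (-1) ^ k * (A.choose (m - k) : ℤ) else 0 := by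
  have h := fwdDiff_iter_eq_sum_shift (1 : ℕ) (fun x : ℕ ↦ ((x.choose m : ℕ) : ℤ)) k A
  have h2 : (∑ j ∈ Finset.range (k + 1), (-1 : ℤ) ^ j * (k.choose j : ℤ) * ((A + j).choose m : ℤ))
      = (-1) ^ k * (fwdDiff (1:ℕ))^[k] (fun x : ℕ ↦ ((x.choose m : ℕ) : ℤ)) A := by
    rw [h, Finset.mul_sum]
    refine Finset.sum_congr rfl fun j hj => ?_
    have hj' : j ≤ k := by simpa [Nat.lt_succ_iff] using hj
    have : (-1 : ℤ) ^ k = (-1) ^ (k - j) * (-1) ^ j := by rw [← pow_add]; congr 1; omega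
    rw [this]
    have h3 : (-1 : ℤ) ^ (k - j) * (-1) ^ (k - j) = 1 := by rw [← mul_pow]; simp
    simp only [smul_eq_mul, mul_one]
    linear_combination (-((-1 : ℤ) ^ j * (k.choose j : ℤ) * ((A + j).choose m : ℤ))) * h3
  rw [h2]
  split_ifs with hkm
  · obtain ⟨j, rfl⟩ := Nat.exists_eq_add_of_le hkm
    rw [fwdDiff_iter_choose]
    simp
  · push Not at hkm
    rcases Nat.exists_eq_add_of_lt hkm with ⟨i, rfl⟩
    simp_rw [(by ring : m + i + 1 = i + 1 + m), Function.iterate_add_apply,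
      (add_zero m ▸ fwdDiff_iter_choose 0 m), Nat.choose_zero_right, Function.iterate_one, Nat.cast_one, fwdDiff_const,
      fwdDiff_iter_eq_sum_shift, smul_zero, Finset.sum_const_zero, mul_zero]

lemma auxS2 (v m n : ℕ) : (∑ k ∈ Finset.range (m + 1), (-1 : ℤ) ^ k * ((v + m).choose (m - k) : ℤ) * ((k + v + n).choose k : ℤ))
    = (-1) ^ m * (n.choose m : ℤ) := by
  have h := Ring.add_choose_eq (R := ℤ) (r := -((v + n + 1 : ℕ) : ℤ)) (s := ((v + m : ℕ) : ℤ)) m (Commute.all _ _)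
  rw [Finset.Nat.sum_antidiagonal_eq_sum_range_succ_mk] at h
  have h2 : ∀ (p : ℕ) (k : ℕ), Ring.choose (-((p + 1 : ℕ) : ℤ)) k = (-1) ^ k * ((p + k).choose k : ℤ) := by
    intro p k
    rw [Ring.choose_neg]
    have : (((p + 1 : ℕ) : ℤ) + k - 1) = ((p + k : ℕ) : ℤ) := by push_cast; ring
    rw [this, Ring.choose_natCast]
    simp [Int.negOnePow_def, Units.smul_def]
  have h3 : Ring.choose (-((v + n + 1 : ℕ) : ℤ) + ((v + m : ℕ) : ℤ)) m = (-1) ^ m * (n.choose m : ℤ) := by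
    rcases le_or_gt m n with hmn | hmn
    · obtain ⟨p, rfl⟩ := Nat.exists_eq_add_of_le hmn
      have : (-((v + (m + p) + 1 : ℕ) : ℤ) + ((v + m : ℕ) : ℤ)) = -((p + 1 : ℕ) : ℤ) := by push_cast; ring
      rw [this, h2, add_comm p m]
    · obtain ⟨p, rfl⟩ := Nat.exists_eq_add_of_lt hmn
      have : (-((v + n + 1 : ℕ) : ℤ) + ((v + (n + p + 1) : ℕ) : ℤ)) = ((p : ℕ) : ℤ) := by push_cast; ring
      rw [this, Ring.choose_natCast, Nat.choose_eq_zero_of_lt (by omega), Nat.choose_eq_zero_of_lt (by omega)]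
      simp
  rw [h3] at h
  rw [h]
  refine Finset.sum_congr rfl fun k _ => ?_
  rw [h2, Ring.choose_natCast, show k + v + n = v + n + k by ring]
  ring

/-- The normalised Laguerre moment. -/
def DD (v k m : ℕ) : ℝ := ∑ j ∈ Finset.range (k + 1),
  (-1 : ℝ) ^ j * (k.choose j : ℝ) * (((v + m + j).factorial : ℝ) / ((v + j).factorial : ℝ))

lemma fact_ratio (n s : ℕ) : ((n + s).factorial : ℝ) / (n.factorial : ℝ) = s.factorial * ((n + s).choose s : ℝ) := by
  have h := Nat.choose_mul_factorial_mul_factorial (Nat.le_add_left s n)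
  rw [Nat.add_sub_cancel] at h
  have : (n.factorial : ℝ) ≠ 0 := by positivity
  rw [div_eq_iff this, ← h]; push_cast; ring

lemma DD_eq (v k m : ℕ) : DD v k m = if k ≤ m then (-1) ^ k * m.factorial * ((v + m).choose (m - k) : ℝ) else 0 := by
  have h := auxS1 k (v + m) m
  have h' := congrArg (fun z : ℤ => (m.factorial : ℝ) * (z : ℝ)) h
  simp only [DD]
  push_cast at h'
  rw [Finset.mul_sum] at h'
  convert h' using 1
  · refine Finset.sum_congr rfl fun j _ => ?_
    rw [show v + m + j = (v + j) + m by ring, fact_ratio]; ring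
  · split_ifs
    · ring
    · simp

/-- The moment series. -/
def EE (v k : ℕ) (a : ℝ) : ℝ := ∑' n : ℕ, a ^ n / n.factorial * (((k + v + n).factorial : ℝ) / ((v + n).factorial : ℝ))

lemma fact_ratio_le (n s : ℕ) : ((n + s).factorial : ℝ) / (n.factorial : ℝ) ≤ s.factorial * 2 ^ (n + s) := by
  rw [fact_ratio]
  gcongr
  exact_mod_cast Nat.choose_le_two_pow _ _

lemma EE_summable (v k : ℕ) {a : ℝ} (ha : 0 < a) :
    Summable fun n : ℕ => a ^ n / n.factorial * (((k + v + n).factorial : ℝ) / ((v + n).factorial : ℝ)) := by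
  have := (Real.summable_pow_div_factorial (a * 2)).mul_left ((k.factorial : ℝ) * 2 ^ (v + k))
  refine Summable.of_nonneg_of_le (fun n => by positivity) (fun n => ?_) this
  rw [show k + v + n = (v + n) + k by ring]
  calc _ ≤ a ^ n / n.factorial * (k.factorial * 2 ^ (v + n + k)) := by
        gcongr; exact fact_ratio_le _ _
    _ = _ := by rw [mul_pow, pow_add, pow_add, pow_add]; ring

lemma EE_hasSum (v k : ℕ) {a : ℝ} (ha : 0 < a) :
    HasSum (fun n : ℕ => a ^ n / n.factorial * (((k + v + n).factorial : ℝ) / ((v + n).factorial : ℝ))) (EE v k a) :=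
  (EE_summable v k ha).hasSum

lemma EE_pos (v k : ℕ) {a : ℝ} (ha : 0 < a) : 0 < EE v k a :=
  (EE_summable v k ha).tsum_pos (fun n => by positivity) 0 (by positivity)

lemma lemC (v N m : ℕ) (hm : m < N) {a : ℝ} (ha : 0 < a) :
    ∑ k ∈ Finset.range N, 1 / (k.factorial : ℝ) * DD v k m * EE v k a = Real.exp a * (-a) ^ m := by
  have h1 : HasSum (fun n : ℕ => ∑ k ∈ Finset.range N, 1 / (k.factorial : ℝ) * DD v k m *
      (a ^ n / n.factorial * (((k + v + n).factorial : ℝ) / ((v + n).factorial : ℝ))))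
      (∑ k ∈ Finset.range N, 1 / (k.factorial : ℝ) * DD v k m * EE v k a) :=
    hasSum_sum fun k _ => (EE_hasSum v k ha).mul_left _
  have h2 : ∀ n : ℕ, ∑ k ∈ Finset.range N, 1 / (k.factorial : ℝ) * DD v k m *
      (a ^ n / n.factorial * (((k + v + n).factorial : ℝ) / ((v + n).factorial : ℝ)))
      = a ^ n / n.factorial * (m.factorial * ((-1) ^ m * (n.choose m : ℝ))) := by
    intro n
    have h := auxS2 v m n
    have h' := congrArg (fun z : ℤ => (z : ℝ)) h
    push_cast at h'
    rw [← h', Finset.mul_sum, Finset.mul_sum]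
    rw [← Finset.sum_subset (Finset.range_mono (show m + 1 ≤ N from hm))]
    · refine Finset.sum_congr rfl fun k hk => ?_
      have hk' : k ≤ m := by simpa [Nat.lt_succ_iff] using hk
      rw [DD_eq, if_pos hk', show k + v + n = (v + n) + k by ring, fact_ratio]
      field_simp
    · intro k _ hk
      rw [DD_eq, if_neg (by simpa [Nat.lt_succ_iff] using hk)]; simp
  simp_rw [h2] at h1
  refine h1.unique ?_
  rw [← hasSum_nat_add_iff' m]
  have h0 : ∑ i ∈ Finset.range m, a ^ i / (i.factorial : ℝ) * (m.factorial * ((-1) ^ m * (i.choose m : ℝ))) = 0 := by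
    refine Finset.sum_eq_zero fun i hi => ?_
    rw [Nat.choose_eq_zero_of_lt (by simpa using hi)]; simp
  rw [h0, sub_zero]
  have he : HasSum (fun n : ℕ => a ^ n / (n.factorial : ℝ)) (Real.exp a) := by
    rw [Real.exp_eq_exp_ℝ]; exact NormedSpace.expSeries_div_hasSum_exp a
  have := he.mul_right ((-a) ^ m)
  refine (congrArg (fun f : ℕ → ℝ => HasSum f (Real.exp a * (-a) ^ m)) (funext fun n => ?_)).mpr this
  have h := fact_ratio n m
  have hn : (n.factorial : ℝ) ≠ 0 := by positivity
  have hnm : ((n + m).factorial : ℝ) ≠ 0 := by positivity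
  rw [div_eq_iff hn] at h
  rw [pow_add, neg_pow a m, div_mul_eq_mul_div, div_mul_eq_mul_div, div_eq_div_iff hnm hn, h]
  ring

lemma Gam_nat (n k : ℕ) : Real.Gamma ((n : ℝ) + 1 + k) = ((n + k).factorial : ℝ) := by
  rw [← Real.Gamma_nat_eq_factorial]; congr 1; push_cast; ring

lemma gam_int (n : ℕ) : IntegrableOn (fun u : ℝ => u ^ n * Real.exp (-u)) (Set.Ioi 0) := by
  have := Real.GammaIntegral_convergent (s := (n : ℝ) + 1) (by positivity)
  refine this.congr_fun (fun u _ => ?_) measurableSet_Ioi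
  simp only [add_sub_cancel_right, Real.rpow_natCast]; ring

lemma gam_val (n : ℕ) : ∫ u in Set.Ioi (0 : ℝ), u ^ n * Real.exp (-u) = n.factorial := by
  rw [← Real.Gamma_nat_eq_factorial, Real.Gamma_eq_integral (by positivity)]
  refine setIntegral_congr_fun measurableSet_Ioi fun u _ => ?_
  simp only [add_sub_cancel_right, Real.rpow_natCast]; ring

lemma poch_neg (k j : ℕ) : poch (-(k : ℝ)) j = (-1) ^ j * (j.factorial * (k.choose j : ℝ)) := by
  have : (j.factorial * (k.choose j : ℝ)) = (k.descFactorial j : ℝ) := by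
    rw [Nat.descFactorial_eq_factorial_mul_choose]; push_cast; rfl
  rw [this]
  induction j with
  | zero => simp [poch]
  | succ j ih =>
    have h2 : poch (-(k : ℝ)) (j + 1) = poch (-(k : ℝ)) j * (-(k : ℝ) + j) := by
      simp [poch, Finset.prod_range_succ]
    rw [h2, ih (by rw [Nat.descFactorial_eq_factorial_mul_choose]; push_cast; rfl), Nat.descFactorial_succ]
    rcases le_or_gt j k with h | h
    · push_cast [Nat.cast_sub h]; ring
    · rw [Nat.descFactorial_eq_zero_iff_lt.mpr h]; simp

lemma poch_pos (v j : ℕ) : poch ((v : ℝ) + 1) j = ((v + j).factorial : ℝ) / v.factorial := by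
  induction j with
  | zero => simp [poch]; rw [div_self (by positivity)]
  | succ j ih =>
    have h2 : poch ((v : ℝ) + 1) (j + 1) = poch ((v : ℝ) + 1) j * ((v : ℝ) + 1 + j) := by
      simp [poch, Finset.prod_range_succ]
    rw [h2, ih, ← add_assoc, Nat.factorial_succ]; push_cast; ring

lemma hyp1F1T_eq (v k : ℕ) (u : ℝ) : hyp1F1T k ((v : ℝ) + 1) u =
    v.factorial * ∑ j ∈ Finset.range (k + 1), (-1) ^ j * (k.choose j : ℝ) / ((v + j).factorial : ℝ) * u ^ j := by
  rw [hyp1F1T, Finset.mul_sum]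
  refine Finset.sum_congr rfl fun j _ => ?_
  rw [poch_neg, poch_pos]
  field_simp

/-- ratio of Gamma functions -/
def cc (r : ℕ) (μ ν : Fin r → ℕ) (k : ℕ) : ℝ :=
  ∏ l, Real.Gamma ((μ l : ℝ) + 1 + k) / Real.Gamma ((ν l : ℝ) + 1 + k)

lemma cc_pos (r : ℕ) (μ ν : Fin r → ℕ) (k : ℕ) : 0 < cc r μ ν k :=
  Finset.prod_pos fun l _ => by rw [Gam_nat, Gam_nat]; positivity

lemma cc_le (r : ℕ) (μ ν : Fin r → ℕ) (h : ∀ l, ν l < μ l) (k : ℕ) :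
    cc r μ ν k ≤ (∏ l, ((μ l - ν l).factorial : ℝ) * 2 ^ (μ l)) * (2 ^ r) ^ k := by
  have : ((2 : ℝ) ^ r) ^ k = ∏ l : Fin r, (2 : ℝ) ^ k := by
    simp [← pow_mul, mul_comm]
  rw [this, ← Finset.prod_mul_distrib, cc]
  refine Finset.prod_le_prod (fun l _ => by rw [Gam_nat, Gam_nat]; positivity) fun l _ => ?_
  rw [Gam_nat, Gam_nat]
  have h1 := fact_ratio_le (ν l + k) (μ l - ν l)
  have h2 : ν l + k + (μ l - ν l) = μ l + k := by have := h l; omega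
  rw [h2] at h1
  rw [mul_assoc, ← pow_add]; exact h1

lemma lemA (r v N : ℕ) (μ ν : Fin r → ℕ) (h : ∀ l, ν l < μ l) (x : ℝ) (q : ℕ → ℝ) :
    ∫ u in Set.Ioi (0 : ℝ), u ^ v * Real.exp (-u) * PsiMu r v μ ν u x * ∑ m ∈ Finset.range N, q m * u ^ m
    = ∑ k ∈ Finset.range N, x ^ k * (1 / (k.factorial : ℝ) * cc r μ ν k * ∑ m ∈ Finset.range N, q m * DD v k m) := by
  set A : ℕ → ℝ := fun k => x ^ k / k.factorial * cc r μ ν k with hA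
  set F : ℕ → ℝ → ℝ := fun k u => ∑ m ∈ Finset.range N, ∑ j ∈ Finset.range (k + 1),
    (A k * ((-1) ^ j * (k.choose j : ℝ) / ((v + j).factorial : ℝ)) * q m) * (u ^ (v + m + j) * Real.exp (-u)) with hF
  have hFint : ∀ k, IntegrableOn (F k) (Set.Ioi 0) := fun k =>
    integrable_finsetSum _ fun m _ => integrable_finsetSum _ fun j _ => (gam_int _).const_mul _
  have hFval : ∀ k, ∫ u in Set.Ioi (0 : ℝ), F k u = A k * ∑ m ∈ Finset.range N, q m * DD v k m := by
    intro k
    simp only [hF]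
    rw [integral_finsetSum _ fun m _ => integrable_finsetSum _ fun j _ => (gam_int _).const_mul _, Finset.mul_sum]
    refine Finset.sum_congr rfl fun m _ => ?_
    rw [integral_finsetSum _ fun j _ => (gam_int _).const_mul _, DD, Finset.mul_sum, Finset.mul_sum]
    refine Finset.sum_congr rfl fun j _ => ?_
    rw [integral_const_mul, gam_val]; ring
  set B : ℝ := ∑ m ∈ Finset.range N, |q m| * (m.factorial * 2 ^ (v + m)) with hB
  have hFbd : ∀ k, ∫ u in Set.Ioi (0 : ℝ), ‖F k u‖ ≤ |A k| * B * (2 * 2) ^ k := by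
    intro k
    have hi2 : ∀ m j, IntegrableOn (fun u : ℝ => (|A k| * ((k.choose j : ℝ) / ((v + j).factorial : ℝ)) * |q m|) * (u ^ (v + m + j) * Real.exp (-u))) (Set.Ioi 0) :=
      fun m j => (gam_int _).const_mul _
    calc ∫ u in Set.Ioi (0 : ℝ), ‖F k u‖
        ≤ ∫ u in Set.Ioi (0 : ℝ), ∑ m ∈ Finset.range N, ∑ j ∈ Finset.range (k + 1),
          (|A k| * ((k.choose j : ℝ) / ((v + j).factorial : ℝ)) * |q m|) * (u ^ (v + m + j) * Real.exp (-u)) := by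
          refine setIntegral_mono_on (hFint k).norm
            (integrable_finsetSum _ fun m _ => integrable_finsetSum _ fun j _ => hi2 m j) measurableSet_Ioi fun u hu => ?_
          have hu' : (0 : ℝ) < u := hu
          refine (norm_sum_le _ _).trans (Finset.sum_le_sum fun m _ => (norm_sum_le _ _).trans (Finset.sum_le_sum fun j _ => ?_))
          rw [Real.norm_eq_abs]
          simp only [abs_mul, abs_div, abs_pow, abs_neg, abs_one, one_pow, one_mul, Nat.abs_cast, abs_of_pos hu', Real.abs_exp]
          exact le_rfl
      _ = ∑ m ∈ Finset.range N, ∑ j ∈ Finset.range (k + 1),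
          |A k| * ((k.choose j : ℝ) / ((v + j).factorial : ℝ)) * |q m| * ((v + m + j).factorial : ℝ) := by
          rw [integral_finsetSum _ fun m _ => integrable_finsetSum _ fun j _ => hi2 m j]
          refine Finset.sum_congr rfl fun m _ => ?_
          rw [integral_finsetSum _ fun j _ => hi2 m j]
          refine Finset.sum_congr rfl fun j _ => ?_
          rw [integral_const_mul, gam_val]
      _ ≤ ∑ m ∈ Finset.range N, ∑ j ∈ Finset.range (k + 1),
          (|A k| * |q m| * (m.factorial * 2 ^ (v + m) * 2 ^ k)) * (k.choose j : ℝ) := by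
          refine Finset.sum_le_sum fun m _ => Finset.sum_le_sum fun j hj => ?_
          have hj' : j ≤ k := by simpa [Nat.lt_succ_iff] using hj
          have h1 := fact_ratio_le (v + j) m
          have h2 : (2 : ℝ) ^ (v + j + m) ≤ 2 ^ (v + m) * 2 ^ k := by
            rw [← pow_add]; exact pow_le_pow_right₀ (by norm_num) (by omega)
          have h3 : ((v + m + j).factorial : ℝ) / ((v + j).factorial : ℝ) ≤ m.factorial * 2 ^ (v + m) * 2 ^ k := by
            rw [show v + m + j = v + j + m by ring]
            refine h1.trans ?_
            rw [mul_assoc]; gcongr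
          calc _ = (|A k| * |q m|) * (((v + m + j).factorial : ℝ) / ((v + j).factorial : ℝ)) * (k.choose j : ℝ) := by ring
            _ ≤ _ := by gcongr
      _ = _ := by
          simp_rw [← Finset.mul_sum]
          have : ∑ i ∈ Finset.range (k + 1), (k.choose i : ℝ) = 2 ^ k := by exact_mod_cast Nat.sum_range_choose k
          rw [this, hB, ← Finset.sum_mul, mul_pow, Finset.mul_sum, Finset.sum_mul, Finset.sum_mul]
          refine Finset.sum_congr rfl fun m _ => ?_
          ring
  have hBnn : 0 ≤ B := Finset.sum_nonneg fun m _ => by positivity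
  have hsum : Summable fun k => ∫ u in Set.Ioi (0 : ℝ), ‖F k u‖ := by
    have hs := (Real.summable_pow_div_factorial (|x| * 2 ^ r * (2 * 2))).mul_left
      ((∏ l, ((μ l - ν l).factorial : ℝ) * 2 ^ (μ l)) * B)
    refine Summable.of_nonneg_of_le (fun k => integral_nonneg fun u => norm_nonneg _) (fun k => (hFbd k).trans ?_) hs
    have hA' : |A k| ≤ |x| ^ k / k.factorial * ((∏ l, ((μ l - ν l).factorial : ℝ) * 2 ^ (μ l)) * (2 ^ r) ^ k) := by
      simp only [hA]
      rw [abs_mul, abs_div, abs_pow, Nat.abs_cast, abs_of_pos (cc_pos r μ ν k)]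
      gcongr
      exact cc_le r μ ν h k
    calc _ ≤ |x| ^ k / k.factorial * ((∏ l, ((μ l - ν l).factorial : ℝ) * 2 ^ (μ l)) * (2 ^ r) ^ k) * B * (2 * 2) ^ k := by gcongr
      _ = _ := by rw [mul_pow (|x| * 2 ^ r), mul_pow |x|]; ring
  have hmain := hasSum_integral_of_summable_integral_norm hFint hsum
  have hEq : ∀ u : ℝ, ∑' k, F k u = u ^ v * Real.exp (-u) * PsiMu r v μ ν u x * ∑ m ∈ Finset.range N, q m * u ^ m := by
    intro u
    have hFe : ∀ k, F k u = (u ^ v * Real.exp (-u)) * ((1 / Real.Gamma ((v : ℝ) + 1)) *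
       (x ^ k / Nat.factorial k * hyp1F1T k ((v : ℝ) + 1) u *
      ∏ l, Real.Gamma ((μ l : ℝ) + 1 + k) / Real.Gamma ((ν l : ℝ) + 1 + k))) * (∑ m ∈ Finset.range N, q m * u ^ m) := by
      intro k
      rw [hyp1F1T_eq, Real.Gamma_nat_eq_factorial]
      change _ = (u ^ v * Real.exp (-u)) * ((1 / (v.factorial : ℝ)) *
       (x ^ k / Nat.factorial k * _ * cc r μ ν k)) * _
      have : (u ^ v * Real.exp (-u)) * ((1 / (v.factorial : ℝ)) *
       (x ^ k / Nat.factorial k * (v.factorial * ∑ j ∈ Finset.range (k + 1), (-1) ^ j * (k.choose j : ℝ) / ((v + j).factorial : ℝ) * u ^ j) * cc r μ ν k)) = (u ^ v * Real.exp (-u)) * A k * ∑ j ∈ Finset.range (k + 1), (-1) ^ j * (k.choose j : ℝ) / ((v + j).factorial : ℝ) * u ^ j := by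
        simp only [hA]
        field_simp
      rw [this, Finset.mul_sum]
      refine Finset.sum_congr rfl fun m _ => ?_
      rw [Finset.mul_sum, Finset.sum_mul]
      refine Finset.sum_congr rfl fun j _ => ?_
      rw [pow_add, pow_add]; ring
    simp_rw [hFe]
    rw [tsum_mul_right, tsum_mul_left, tsum_mul_left, PsiMu]
  simp_rw [hEq, hFval] at hmain
  have hfin : HasSum (fun k => A k * ∑ m ∈ Finset.range N, q m * DD v k m) (∑ k ∈ Finset.range N, A k * ∑ m ∈ Finset.range N, q m * DD v k m) := by
    refine hasSum_sum_of_ne_finset_zero fun k hk => ?_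
    rw [Finset.sum_eq_zero, mul_zero]
    intro m hm
    rw [DD_eq, if_neg, mul_zero]
    simp only [Finset.mem_range] at hk hm
    omega
  rw [hmain.unique hfin]
  refine Finset.sum_congr rfl fun k _ => ?_
  simp only [hA]; ring

lemma bet {α β : ℝ} (hα : 0 < α) (hβ : 0 < β) :
    IntegrableOn (fun x : ℝ => x ^ (α - 1) * (1 - x) ^ (β - 1)) (Set.Ioo 0 1) ∧
    ∫ x in Set.Ioo (0 : ℝ) 1, x ^ (α - 1) * (1 - x) ^ (β - 1) =
      Real.Gamma α * Real.Gamma β / Real.Gamma (α + β) := by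
  have hb := ProbabilityTheory.beta_pos hα hβ
  have h1 := ProbabilityTheory.lintegral_betaPDF_eq_one hα hβ
  rw [ProbabilityTheory.lintegral_betaPDF] at h1
  have h2 : ∫ x in Set.Ioo (0 : ℝ) 1, 1 / ProbabilityTheory.beta α β * x ^ (α - 1) * (1 - x) ^ (β - 1) = 1 := by
    rw [integral_eq_lintegral_of_nonneg_ae, h1, ENNReal.toReal_one]
    · refine ae_restrict_of_forall_mem measurableSet_Ioo fun x hx => ?_
      have := Real.rpow_nonneg hx.1.le (α - 1)
      have := Real.rpow_nonneg (sub_nonneg.mpr hx.2.le) (β - 1)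
      simp only [Pi.zero_apply]
      positivity
    · exact Measurable.aestronglyMeasurable (by fun_prop)
  simp_rw [mul_assoc] at h2
  rw [integral_const_mul, div_mul_eq_mul_div, one_mul, div_eq_one_iff_eq hb.ne'] at h2
  refine ⟨?_, h2⟩
  exact Integrable.of_integral_ne_zero (by rw [h2]; exact hb.ne')

lemma hyp0_meas (b : ℝ) : Measurable (hyp0F1R b) := by
  unfold hyp0F1R
  exact Measurable.tsum fun k => by fun_prop

/-- one variable weight -/
def GG (v : ℕ) (a s : ℝ) : ℝ := s ^ v * Real.exp (-s) * hyp0F1R ((v : ℝ) + 1) (-(-a * s))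

lemma GG_meas (v : ℕ) (a : ℝ) : Measurable (GG v a) := by
  have := hyp0_meas ((v : ℝ) + 1)
  unfold GG
  fun_prop

lemma GG_nonneg (v : ℕ) {a s : ℝ} (ha : 0 < a) (hs : 0 < s) : 0 ≤ GG v a s := by
  refine mul_nonneg (by positivity) (tsum_nonneg fun k => ?_)
  rw [Gam_nat, Real.Gamma_nat_eq_factorial]
  have : 0 < -(-a * s) := by rw [neg_mul, neg_neg]; positivity
  positivity

lemma GG_val (v i : ℕ) {a : ℝ} (ha : 0 < a) :
    ∫ s in Set.Ioi (0 : ℝ), s ^ i * GG v a s = v.factorial * EE v i a := by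
  set F : ℕ → ℝ → ℝ := fun k s => (v.factorial * (a ^ k / k.factorial) / ((v + k).factorial : ℝ)) *
    (s ^ (i + v + k) * Real.exp (-s)) with hF
  have hFint : ∀ k, IntegrableOn (F k) (Set.Ioi 0) := fun k => (gam_int _).const_mul _
  have hFval : ∀ k, ∫ s in Set.Ioi (0 : ℝ), F k s = v.factorial * (a ^ k / k.factorial *
      (((i + v + k).factorial : ℝ) / ((v + k).factorial : ℝ))) := by
    intro k
    simp only [hF]
    rw [integral_const_mul, gam_val]; ring
  have hFn : ∀ k, ∫ s in Set.Ioi (0 : ℝ), ‖F k s‖ = ∫ s in Set.Ioi (0 : ℝ), F k s := by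
    intro k
    refine setIntegral_congr_fun measurableSet_Ioi fun s hs => ?_
    have hs' : (0 : ℝ) < s := hs
    exact Real.norm_of_nonneg (by simp only [hF]; positivity)
  have hE := (EE_hasSum v i ha).mul_left (v.factorial : ℝ)
  have hsum : Summable fun k => ∫ s in Set.Ioi (0 : ℝ), ‖F k s‖ := by
    simp_rw [hFn, hFval]; exact hE.summable
  have hmain := hasSum_integral_of_summable_integral_norm hFint hsum
  simp_rw [hFval] at hmain
  rw [← hmain.unique hE]
  refine setIntegral_congr_fun measurableSet_Ioi fun s hs => ?_
  simp only [GG, hyp0F1R]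
  rw [← mul_assoc, ← tsum_mul_left]
  refine tsum_congr fun k => ?_
  rw [Gam_nat, Real.Gamma_nat_eq_factorial]
  simp only [hF]
  rw [neg_mul, neg_neg, mul_pow, pow_add, pow_add]
  field_simp

lemma GG_int (v i : ℕ) {a : ℝ} (ha : 0 < a) :
    IntegrableOn (fun s : ℝ => s ^ i * GG v a s) (Set.Ioi 0) := by
  refine Integrable.of_integral_ne_zero ?_
  rw [GG_val v i ha]
  have := EE_pos v i ha
  positivity

lemma GG_scale (v i : ℕ) {a T : ℝ} (ha : 0 < a) (hT : 0 < T) :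
    IntegrableOn (fun y : ℝ => y ^ i * GG v a (y / T)) (Set.Ioi 0) ∧
    ∫ y in Set.Ioi (0 : ℝ), y ^ i * GG v a (y / T) = T ^ (i + 1) * (v.factorial * EE v i a) := by
  have he : (fun y : ℝ => y ^ i * GG v a (y / T)) =
      fun y : ℝ => T ^ i * ((fun s : ℝ => s ^ i * GG v a s) (T⁻¹ * y)) := by
    funext y
    have : T⁻¹ * y = y / T := by rw [div_eq_inv_mul]
    simp only [this]
    rw [div_pow]; field_simp
  rw [he]
  constructor
  · refine Integrable.const_mul ?_ _
    refine (integrableOn_Ioi_comp_mul_left_iff (fun s : ℝ => s ^ i * GG v a s) 0 (inv_pos.mpr hT)).mpr ?_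
    rw [mul_zero]; exact GG_int v i ha
  · rw [integral_const_mul, integral_comp_mul_left_Ioi (fun s : ℝ => s ^ i * GG v a s) 0 (inv_pos.mpr hT),
      mul_zero, GG_val v i ha, inv_inv, smul_eq_mul]
    ring

lemma unitCube_eq (r : ℕ) : unitCube r = Set.pi Set.univ (fun _ : Fin r => Set.Ioo (0 : ℝ) 1) := by
  ext t; simp [unitCube, Set.mem_pi]

lemma unitCube_meas (r : ℕ) : MeasurableSet (unitCube r) := by
  rw [unitCube_eq]; exact MeasurableSet.univ_pi fun _ => measurableSet_Ioo

lemma unitCube_restrict (r : ℕ) : (volume : Measure (Fin r → ℝ)).restrict (unitCube r) =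
    Measure.pi fun _ : Fin r => (volume : Measure ℝ).restrict (Set.Ioo 0 1) := by
  rw [unitCube_eq, volume_pi, Measure.restrict_pi_pi]

lemma cube_int (r i : ℕ) (μ ν : Fin r → ℕ) (h : ∀ l, ν l < μ l) :
    IntegrableOn (fun t : Fin r → ℝ => (∏ l, (t l) ^ ((ν l : ℝ) - 1) * (1 - t l) ^ ((μ l : ℝ) - (ν l : ℝ) - 1)) *
      (∏ l, t l) ^ (i + 1)) (unitCube r) ∧
    ∫ t in unitCube r, (∏ l, (t l) ^ ((ν l : ℝ) - 1) * (1 - t l) ^ ((μ l : ℝ) - (ν l : ℝ) - 1)) *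
      (∏ l, t l) ^ (i + 1) = (∏ l, Real.Gamma ((μ l : ℝ) - (ν l : ℝ))) * (cc r μ ν i)⁻¹ := by
  set f : Fin r → ℝ → ℝ := fun l x => x ^ ((ν l : ℝ) + 1 + i - 1) * (1 - x) ^ ((μ l : ℝ) - (ν l : ℝ) - 1) with hf
  have hα : ∀ l, (0 : ℝ) < (ν l : ℝ) + 1 + i := fun l => by positivity
  have hβ : ∀ l, (0 : ℝ) < (μ l : ℝ) - ν l := fun l => sub_pos.mpr (by exact_mod_cast h l)
  have he : Set.EqOn (fun t : Fin r → ℝ => ∏ l, f l (t l)) (fun t : Fin r → ℝ => (∏ l, (t l) ^ ((ν l : ℝ) - 1) * (1 - t l) ^ ((μ l : ℝ) - (ν l : ℝ) - 1)) *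
      (∏ l, t l) ^ (i + 1)) (unitCube r) := by
    intro t ht
    simp only [hf]
    rw [← Finset.prod_pow, ← Finset.prod_mul_distrib]
    refine Finset.prod_congr rfl fun l _ => ?_
    have ht0 := (ht l).1
    rw [show (ν l : ℝ) + 1 + i - 1 = ((ν l : ℝ) - 1) + ((i + 1 : ℕ) : ℝ) by push_cast; ring,
      Real.rpow_add ht0, Real.rpow_natCast]
    ring
  constructor
  · refine IntegrableOn.congr_fun ?_ he (unitCube_meas r)
    rw [IntegrableOn, unitCube_restrict]
    exact Integrable.fintype_prod fun l => (bet (hα l) (hβ l)).1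
  · rw [← setIntegral_congr_fun (unitCube_meas r) he, unitCube_restrict, integral_fintype_prod_eq_prod,
      cc, ← Finset.prod_inv_distrib, ← Finset.prod_mul_distrib]
    refine Finset.prod_congr rfl fun l _ => ?_
    rw [(bet (hα l) (hβ l)).2, inv_div, show (ν l : ℝ) + 1 + i + ((μ l : ℝ) - ν l) = (μ l : ℝ) + 1 + i by ring]
    ring

lemma lemB (r v i : ℕ) (μ ν : Fin r → ℕ) (h : ∀ l, ν l < μ l) {a : ℝ} (ha : 0 < a) :
    ∫ x in Set.Ioi (0 : ℝ), x ^ i * ((∏ l, Real.Gamma ((μ l : ℝ) - (ν l : ℝ))) *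
        PhiMuR r v μ ν (-a) x) =
    (∏ l, Real.Gamma ((μ l : ℝ) - (ν l : ℝ))) * (cc r μ ν i)⁻¹ * EE v i a := by
  set C := ∏ l, Real.Gamma ((μ l : ℝ) - (ν l : ℝ)) with hC
  have hCpos : 0 < C := Finset.prod_pos fun l _ => Real.Gamma_pos_of_pos (sub_pos.mpr (by exact_mod_cast h l))
  set W : (Fin r → ℝ) → ℝ := fun t => ∏ l, (t l) ^ ((ν l : ℝ) - 1) * (1 - t l) ^ ((μ l : ℝ) - (ν l : ℝ) - 1) with hW
  have hWm : Measurable W := by simp only [hW]; fun_prop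
  have hWnn : ∀ t ∈ unitCube r, 0 ≤ W t := fun t ht => Finset.prod_nonneg fun l _ =>
    mul_nonneg (Real.rpow_nonneg (ht l).1.le _) (Real.rpow_nonneg (sub_nonneg.mpr (ht l).2.le) _)
  have hT : ∀ t ∈ unitCube r, 0 < ∏ l, t l := fun t ht => Finset.prod_pos fun l _ => (ht l).1
  set f : ℝ → (Fin r → ℝ) → ℝ := fun y t => W t * (y ^ i * GG v a (y / ∏ l, t l)) with hf
  have hfm : Measurable (Function.uncurry f) := by
    have := GG_meas v a
    simp only [hf, Function.uncurry_def]
    fun_prop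
  have hinner : ∀ t ∈ unitCube r, ∫ y in Set.Ioi (0 : ℝ), f y t = W t * (∏ l, t l) ^ (i + 1) * (v.factorial * EE v i a) := by
    intro t ht
    simp only [hf]
    rw [integral_const_mul, (GG_scale v i ha (hT t ht)).2]; ring
  have hcube := cube_int r i μ ν h
  have hfprod : Integrable (Function.uncurry f) ((volume.restrict (Set.Ioi (0 : ℝ))).prod (volume.restrict (unitCube r))) := by
    rw [integrable_prod_iff' hfm.aestronglyMeasurable]
    constructor
    · refine ae_restrict_of_forall_mem (unitCube_meas r) fun t ht => ?_
      exact (GG_scale v i ha (hT t ht)).1.const_mul (W t)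
    · refine IntegrableOn.congr_fun (hcube.1.mul_const (v.factorial * EE v i a)) (fun t ht => ?_) (unitCube_meas r)
      change W t * (∏ l, t l) ^ (i + 1) * (v.factorial * EE v i a) = _
      rw [← hinner t ht]
      refine setIntegral_congr_fun measurableSet_Ioi fun y hy => ?_
      have hy' : (0 : ℝ) < y := hy
      have := GG_nonneg v ha (div_pos hy' (hT t ht))
      have := hWnn t ht
      exact (Real.norm_of_nonneg (by simp only [hf]; positivity)).symm
  have hstart : ∀ y : ℝ, y ^ i * (C * PhiMuR r v μ ν (-a) y) = 1 / (v.factorial : ℝ) * ∫ t in unitCube r, f y t := by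
    intro y
    rw [PhiMuR, Real.Gamma_nat_eq_factorial, ← hC]
    have : ∫ t in unitCube r, f y t = y ^ i * ∫ t in unitCube r,
      ((∏ l, (t l) ^ ((ν l : ℝ) - 1) * (1 - t l) ^ ((μ l : ℝ) - (ν l : ℝ) - 1)) *
          (y / ∏ l, t l) ^ v * Real.exp (-(y / ∏ l, t l))) *
        hyp0F1R ((v : ℝ) + 1) (-(-a * (y / ∏ l, t l))) := by
      rw [← integral_const_mul]
      congr 1
      funext t
      simp only [hf, hW, GG]
      ring
    rw [this]
    field_simp
  simp_rw [hstart]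
  rw [integral_const_mul, integral_integral_swap hfprod, setIntegral_congr_fun (unitCube_meas r) hinner,
    integral_mul_const]
  have := hcube.2
  simp only [hW]
  rw [this, ← hC]
  field_simp

lemma natDeg_aux (N : ℕ) (a : Fin N → ℝ) (j : Fin N) :
    ∃ p : ℕ → ℝ, ∀ u : ℝ, Real.exp (-(a j)) * ∏ l ∈ Finset.univ.erase j, (u - a l) / (a j - a l) =
      ∑ m ∈ Finset.range N, p m * (-u) ^ m := by
  let P : Polynomial ℝ := Polynomial.C (Real.exp (-(a j))) *
    ∏ l ∈ Finset.univ.erase j, Polynomial.C ((a j - a l)⁻¹) * (-Polynomial.X - Polynomial.C (a l))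
  have hdeg : P.natDegree < N := by
    have hN : 0 < N := j.pos
    have h1 : P.natDegree ≤ (∏ l ∈ Finset.univ.erase j, Polynomial.C ((a j - a l)⁻¹) * (-Polynomial.X - Polynomial.C (a l))).natDegree :=
      Polynomial.natDegree_C_mul_le _ _
    have h2 := Polynomial.natDegree_prod_le (Finset.univ.erase j) (fun l => Polynomial.C ((a j - a l)⁻¹) * (-Polynomial.X - Polynomial.C (a l)))
    have h3 : ∑ l ∈ Finset.univ.erase j, (Polynomial.C ((a j - a l)⁻¹) * (-Polynomial.X - Polynomial.C (a l))).natDegree ≤ ∑ l ∈ Finset.univ.erase j, 1 := by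
      refine Finset.sum_le_sum fun l _ => (Polynomial.natDegree_C_mul_le _ _).trans ?_
      rw [Polynomial.natDegree_sub_C, Polynomial.natDegree_neg, Polynomial.natDegree_X]
    have h4 : ∑ l ∈ Finset.univ.erase j, 1 = N - 1 := by simp
    omega
  refine ⟨P.coeff, fun u => ?_⟩
  rw [← Polynomial.eval_eq_sum_range' hdeg]
  simp only [P, Polynomial.eval_mul, Polynomial.eval_C, Polynomial.eval_prod, Polynomial.eval_sub, Polynomial.eval_neg, Polynomial.eval_X, neg_neg]
  congr 1
  refine Finset.prod_congr rfl fun l _ => ?_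
  rw [div_eq_inv_mul]

/-- **Proposition 4.1** (correlation-kernel form of the eigenvalue density for the
product of truncated unitary matrices and a shifted Ginibre matrix, residue form). -/
theorem prop_4_1 (r ν0 N : ℕ) (hr : 1 ≤ r) (μ ν : Fin r → ℕ) (hμν : ∀ l, ν l < μ l)
    (a : Fin N → ℝ) (ha : ∀ j, 0 < a j) (hdist : Function.Injective a)
    (g : Matrix (Fin N) (Fin N) ℝ)
    (hg : ∀ i j, g i j = ∫ x in Set.Ioi (0 : ℝ),
      x ^ (i : ℕ) * ((∏ l, Real.Gamma ((μ l : ℝ) - (ν l : ℝ))) *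
        PhiMuR r ν0 μ ν (-(a j)) x))
    (hdet : g.det ≠ 0)
    (Z : ℝ) (hZ : Z = (Nat.factorial N : ℝ) * g.det)
    (K : ℝ → ℝ → ℝ)
    (hK : ∀ x y : ℝ, K x y = ∫ u in Set.Ioi (0 : ℝ),
      u ^ ν0 * Real.exp (-u) * PsiMu r ν0 μ ν u x *
        ∑ j, PhiMuR r ν0 μ ν (-(a j)) y * Real.exp (-(a j)) *
          ∏ l ∈ Finset.univ.erase j, (-u - a l) / (a j - a l))
    (x : Fin N → ℝ) (hx : ∀ i, 0 < x i) :
    (1 / Z) * (Matrix.of fun i j : Fin N => x j ^ (i : ℕ)).det *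
        (Matrix.of fun i j : Fin N =>
          (∏ l, Real.Gamma ((μ l : ℝ) - (ν l : ℝ))) *
            PhiMuR r ν0 μ ν (-(a i)) (x j)).det =
      (1 / (Nat.factorial N : ℝ)) * (Matrix.of fun i j : Fin N => K (x i) (x j)).det := by
  set C := ∏ l, Real.Gamma ((μ l : ℝ) - (ν l : ℝ)) with hC
  choose p hp using natDeg_aux N a
  -- the matrix of coefficients
  set Q : Matrix (Fin N) (Fin N) ℝ := Matrix.of fun j k : Fin N =>
    1 / ((k : ℕ).factorial : ℝ) * cc r μ ν k * ∑ m ∈ Finset.range N, p j m * DD ν0 k m with hQ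
  set Φ : Matrix (Fin N) (Fin N) ℝ := Matrix.of fun i j : Fin N => PhiMuR r ν0 μ ν (-(a i)) (x j) with hΦ
  set V : Matrix (Fin N) (Fin N) ℝ := Matrix.of fun i j : Fin N => x j ^ (i : ℕ) with hV
  have hgv : ∀ i j, g i j = C * (cc r μ ν i)⁻¹ * EE ν0 i (a j) := fun i j => by
    rw [hg, lemB r ν0 i μ ν hμν (ha j)]
  have hbi : Q * g = C • (1 : Matrix (Fin N) (Fin N) ℝ) := by
    ext j l
    rw [Matrix.mul_apply, Matrix.smul_apply, Matrix.one_apply]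
    have h1 : ∑ k : Fin N, Q j k * g k l = C * ∑ m ∈ Finset.range N, p j m * (Real.exp (a l) * (-(a l)) ^ m) := by
      calc ∑ k : Fin N, Q j k * g k l = ∑ k : Fin N, (fun k : ℕ => C * ∑ m ∈ Finset.range N, p j m * (1 / (k.factorial : ℝ) * DD ν0 k m * EE ν0 k (a l))) k := by
            refine Finset.sum_congr rfl fun k _ => ?_
            have := (cc_pos r μ ν k).ne'
            simp only [hQ, Matrix.of_apply, hgv]
            simp_rw [← mul_assoc]
            rw [← Finset.sum_mul]
            have h5 : ∑ m ∈ Finset.range N, p j m * (1 / ((k : ℕ).factorial : ℝ)) * DD ν0 k m = 1 / ((k : ℕ).factorial : ℝ) * ∑ m ∈ Finset.range N, p j m * DD ν0 k m := by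
              rw [Finset.mul_sum]; exact Finset.sum_congr rfl fun m _ => by ring
            rw [h5]
            field_simp
        _ = ∑ k ∈ Finset.range N, C * ∑ m ∈ Finset.range N, p j m * (1 / (k.factorial : ℝ) * DD ν0 k m * EE ν0 k (a l)) :=
            Fin.sum_univ_eq_sum_range (fun k : ℕ => C * ∑ m ∈ Finset.range N, p j m * (1 / (k.factorial : ℝ) * DD ν0 k m * EE ν0 k (a l))) N
        _ = _ := by
            rw [← Finset.mul_sum, Finset.sum_comm]
            congr 1
            refine Finset.sum_congr rfl fun m hm => ?_
            rw [← Finset.mul_sum, lemC ν0 N m (by simpa using hm) (ha l)]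
    have h2 : ∑ m ∈ Finset.range N, p j m * (Real.exp (a l) * (-(a l)) ^ m) =
        Real.exp (a l) * (Real.exp (-(a j)) * ∏ i ∈ Finset.univ.erase j, (a l - a i) / (a j - a i)) := by
      rw [hp, Finset.mul_sum]; exact Finset.sum_congr rfl fun m _ => by ring
    rw [h1, h2, smul_eq_mul]
    congr 1
    split_ifs with hjl
    · subst hjl
      rw [Finset.prod_eq_one, mul_one, ← Real.exp_add, add_neg_cancel, Real.exp_zero]
      intro i hi
      exact div_self (sub_ne_zero.mpr fun h => (Finset.ne_of_mem_erase hi) (hdist h).symm)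
    · rw [Finset.prod_eq_zero (i := l) (by simp [Ne.symm hjl]) (by simp)]; simp
  have hdetQ : Q.det * g.det = C ^ N := by
    rw [← Matrix.det_mul, hbi, Matrix.det_smul]; simp
  have hKmat : (Matrix.of fun i j : Fin N => K (x i) (x j)) = V.transpose * Q.transpose * Φ := by
    ext s t
    rw [Matrix.of_apply, hK]
    have hsum : ∀ u : ℝ, ∑ j, PhiMuR r ν0 μ ν (-(a j)) (x t) * Real.exp (-(a j)) *
          ∏ l ∈ Finset.univ.erase j, (-u - a l) / (a j - a l) =
          ∑ m ∈ Finset.range N, (∑ j, Φ j t * p j m) * u ^ m := by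
      intro u
      simp_rw [mul_assoc, hp, neg_neg, Finset.mul_sum, Finset.sum_mul]
      rw [Finset.sum_comm]
      refine Finset.sum_congr rfl fun m _ => Finset.sum_congr rfl fun j _ => ?_
      simp only [hΦ, Matrix.of_apply]; ring
    simp_rw [hsum]
    rw [lemA r ν0 N μ ν hμν, Matrix.mul_apply]
    simp_rw [Matrix.mul_apply, Matrix.transpose_apply]
    rw [← Fin.sum_univ_eq_sum_range (fun k => x s ^ k * (1 / (k.factorial : ℝ) * cc r μ ν k * ∑ m ∈ Finset.range N, (∑ j, Φ j t * p j m) * DD ν0 k m)) N]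
    simp_rw [Finset.sum_mul]
    conv_rhs => rw [Finset.sum_comm]
    refine Finset.sum_congr rfl fun k _ => ?_
    rw [Finset.sum_comm, Finset.mul_sum, Finset.mul_sum]
    refine Finset.sum_congr rfl fun j _ => ?_
    simp only [hQ, hV, Matrix.of_apply]
    simp_rw [Finset.mul_sum, Finset.sum_mul]
    refine Finset.sum_congr rfl fun m _ => ?_
    ring
  have hXi : (Matrix.of fun i j : Fin N => C * PhiMuR r ν0 μ ν (-(a i)) (x j)) = C • Φ := by
    ext i j; simp [hΦ]
  rw [hKmat, hXi, Matrix.det_smul, Matrix.det_mul, Matrix.det_mul, Matrix.det_transpose, Matrix.det_transpose,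
    Fintype.card_fin, ← hdetQ, hZ]
  have : (N.factorial : ℝ) ≠ 0 := by positivity
  field_simp

end
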